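/- Let G be a finite simple graph whose edge ideal I(G) ⊂ S has a linear resolution. Then v(I(G)) = 1. -/

import Mathlib

open MvPolynomial

noncomputable section

variable (K : Type*) [Field K]

/-- The set of associated primes of `S/I`. -/
def assPrimes {σ : Type*} (I : Ideal (MvPolynomial σ K)) : Set (Ideal (MvPolynomial σ K)) :=
  associatedPrimes (MvPolynomial σ K) (MvPolynomial σ K ⧸ I)

/-- The v-number of `I` at a prime `p`:
`min {d : ∃ homogeneous f of degree d with (I : f) = p}`. -/
def vNumberAt {σ : Type*} (I p : Ideal (MvPolynomial σ K)) : ℕ :=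
  sInf {d | ∃ f : MvPolynomial σ K, f.IsHomogeneous d ∧ I.colon (Ideal.span {f}) = p}

/-- The v-number of `I`:
`min {d : ∃ homogeneous f of degree d with (I : f) ∈ Ass(I)}`. -/
def vNumber {σ : Type*} (I : Ideal (MvPolynomial σ K)) : ℕ :=
  sInf {d | ∃ f : MvPolynomial σ K, f.IsHomogeneous d ∧
    I.colon (Ideal.span {f}) ∈ assPrimes K I}

/-- The initial degree `α(I) = min {d : I_d ≠ 0}`. -/
def initialDegree {σ : Type*} (I : Ideal (MvPolynomial σ K)) : ℕ :=
  sInf {d | ∃ f ∈ I, f ≠ 0 ∧ f.IsHomogeneous d}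

/-- `I` has a `d`-linear (free) resolution: there is a free resolution
`⋯ → F_1 → F_0 → I → 0` in which `F_0` has a basis mapping to homogeneous generators of
degree `d` and all the syzygy matrices consist of homogeneous linear forms (so `F_i` is
generated in degree `d + i`).  This happens iff the minimal graded free resolution of `I`
is linear, i.e. `β_{i,j}(I) = 0` for `j ≠ i + d`. -/
def HasLinearResolution {σ : Type*} (I : Ideal (MvPolynomial σ K)) (d : ℕ) : Prop :=
  ∃ (b : ℕ → ℕ) (g : Fin (b 0) → MvPolynomial σ K)
    (M : ∀ i : ℕ, Matrix (Fin (b i)) (Fin (b (i + 1))) (MvPolynomial σ K)),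
    (∀ j, (g j).IsHomogeneous d) ∧
    Ideal.span (Set.range g) = I ∧
    (∀ i j l, ((M i) j l).IsHomogeneous 1) ∧
    (∀ v : Fin (b 0) → MvPolynomial σ K,
      (∑ j, v j * g j) = 0 ↔ ∃ w, (M 0).mulVec w = v) ∧
    (∀ (i : ℕ) (v : Fin (b (i + 1)) → MvPolynomial σ K),
      (M i).mulVec v = 0 ↔ ∃ w, (M (i + 1)).mulVec w = v)

/-- The edge ideal `I(G) = (x_i x_j : {i,j} ∈ E(G))` of a finite simple graph `G`. -/
def edgeIdeal {n : ℕ} (G : SimpleGraph (Fin n)) : Ideal (MvPolynomial (Fin n) K) :=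
  Ideal.span {f | ∃ i j, G.Adj i j ∧ f = X i * X j}

/-!
Write `H = Gᶜ`. If `v` is a simplicial vertex of `H`, every edge of `G` meets the neighbourhood
`N_G(v)`, so `I(G) : X_v` is the prime ideal generated by the variables in `N_G(v)`. As `I(G)` is
not prime, no constant can play the role of `X_v`, and the v-number is `1`. By Dirac's argument, a
non-complete graph whose minimal vertex separators are cliques has a simplicial vertex; so it
remains to see that `H` is such a graph, which is the relevant half of Fröberg's theorem.

For this, the linear resolution is used through Koszul cohomology. Along the resolution one chases
a Koszul cochain with coefficients of degree `d + 1` whose differential lies in `I`; each step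
replaces it by a cochain with linear coefficients and raises the cochain degree by one, so the
process stops, and going back by exactness of the Koszul complex shows that the cochain is a
coboundary modulo `I`.

Suppose that a separator of `H` between a vertex `b` and a connected set `A` contains vertices `s`
and `t` which are not adjacent in `H`. Let `Q` be the complement of `A ∪ {b, s, t}`. The cochain
`X_s e_s ∧ (∑ a ∈ A, X_a e_a) ∧ e_Q` is a cocycle modulo `I(G)`, and the linear coefficients of a
primitive of it give a function on `A ∪ {b, s, t}` that jumps by one along the edges of `H` from
`s` into `A` and is constant along all other edges of `H`. This is contradicted by the cycle from
`b` via `s` into `A`, through `A`, and back to `b` via `t`.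
-/

section KoszulDifferential

variable {ι R N P : Type*} [LinearOrder ι] [CommRing R] [AddCommGroup N] [Module R N]
  [AddCommGroup P] [Module R P]

/-- The sign of `e_v` in `e_T`: moving `e_v` to its place in the wedge of the `e_u`, `u ∈ T`, takes
`#{u ∈ T | u < v}` transpositions. -/
def koszulSign (v : ι) (T : Finset ι) : ℤ :=
  (-1) ^ {u ∈ T | u < v}.card

theorem koszulSign_mul_self (v : ι) (T : Finset ι) : koszulSign v T * koszulSign v T = 1 := by
  rw [koszulSign, ← mul_pow, neg_one_mul, neg_neg, one_pow]

theorem koszulSign_erase_of_le {u v : ι} (T : Finset ι) (h : v ≤ u) :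
    koszulSign v (T.erase u) = koszulSign v T := by
  rw [koszulSign, koszulSign, Finset.filter_erase, Finset.erase_eq_of_notMem (by simp [h])]

theorem koszulSign_erase_of_lt {u v : ι} {T : Finset ι} (hu : u ∈ T) (h : u < v) :
    koszulSign v (T.erase u) = -koszulSign v T := by
  have hu' : u ∈ {w ∈ T | w < v} := Finset.mem_filter.2 ⟨hu, h⟩
  rw [koszulSign, koszulSign, Finset.filter_erase, ← Finset.card_erase_add_one hu', pow_succ,
    mul_neg_one, neg_neg]

theorem koszulSign_mul_koszulSign_erase {u v : ι} {T : Finset ι} (hu : u ∈ T) (hv : v ∈ T)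
    (huv : u ≠ v) :
    koszulSign u T * koszulSign v (T.erase u) = -(koszulSign v T * koszulSign u (T.erase v)) := by
  rcases huv.lt_or_gt with h | h
  · rw [koszulSign_erase_of_lt hu h, koszulSign_erase_of_le T h.le]; ring
  · rw [koszulSign_erase_of_lt hv h, koszulSign_erase_of_le T h.le]; ring

theorem koszulSign_insert_mul_koszulSign {u v : ι} {T : Finset ι} (huv : u ≠ v) (hu : u ∉ T)
    (hv : v ∉ T) : koszulSign u (insert u (insert v T)) * koszulSign v T =
      -(koszulSign v (insert u (insert v T)) * koszulSign u T) := by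
  have h := koszulSign_mul_koszulSign_erase (T := insert u (insert v T)) (by simp) (by simp) huv
  rwa [Finset.erase_insert (by simp [huv, hu]), Finset.insert_comm u v,
    Finset.erase_insert (by simp [huv.symm, hv]), ← koszulSign_erase_of_le (insert v T) le_rfl,
    ← koszulSign_erase_of_le (insert u T) le_rfl, Finset.erase_insert hv,
    Finset.erase_insert hu, Finset.insert_comm v u] at h

/-- The differential of the Koszul (cochain) complex of a family `x` on a module `N`, that is, the
wedge product with `∑ v, x v • e_v`. An element of the complex is encoded by its coordinates along
all the `e_T`, with `T` a finite set, irrespective of its degree. -/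
def koszulDiff (x : ι → R) : (Finset ι → N) →ₗ[R] (Finset ι → N) where
  toFun c T := ∑ v ∈ T, koszulSign v T • x v • c (T.erase v)
  map_add' c c' := by
    ext T
    simp only [Pi.add_apply, smul_add, Finset.sum_add_distrib]
  map_smul' r c := by
    ext T
    simp only [Pi.smul_apply, RingHom.id_apply, Finset.smul_sum]
    exact Finset.sum_congr rfl fun v _ ↦ by rw [smul_comm r, smul_comm r]

theorem koszulDiff_apply (x : ι → R) (c : Finset ι → N) (T : Finset ι) :
    koszulDiff x c T = ∑ v ∈ T, koszulSign v T • x v • c (T.erase v) :=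
  rfl

theorem koszulDiff_add (x y : ι → R) (c : Finset ι → N) :
    koszulDiff (x + y) c = koszulDiff x c + koszulDiff y c := by
  ext T
  simp only [koszulDiff_apply, Pi.add_apply, add_smul, smul_add, Finset.sum_add_distrib]

theorem koszulDiff_koszulDiff (x : ι → R) (c : Finset ι → N) :
    koszulDiff x (koszulDiff x c) = 0 := by
  ext T
  simp only [koszulDiff_apply, Finset.smul_sum, Finset.sum_sigma', Pi.zero_apply]
  refine Finset.sum_involution (fun p _ ↦ ⟨p.2, p.1⟩) ?_ ?_ ?_ ?_
  · rintro ⟨v, u⟩ h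
    obtain ⟨hv, huv, hu⟩ : v ∈ T ∧ u ≠ v ∧ u ∈ T := by simpa using h
    simp only [smul_comm (x _) (koszulSign _ _), smul_smul (koszulSign _ _), smul_comm (x u) (x v),
      Finset.erase_right_comm (a := u) (b := v), koszulSign_mul_koszulSign_erase hv hu huv.symm,
      neg_smul, neg_add_cancel]
  · rintro ⟨v, u⟩ h - heq
    simp_all
  · rintro ⟨v, u⟩ h
    simp_all [eq_comm]
  · intros
    rfl

theorem koszulDiff_comm (x y : ι → R) (c : Finset ι → N) :
    koszulDiff x (koszulDiff y c) = -koszulDiff y (koszulDiff x c) := by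
  have h := koszulDiff_koszulDiff (x + y) c
  simp only [koszulDiff_add, map_add, koszulDiff_koszulDiff, zero_add, add_zero] at h
  exact eq_neg_of_add_eq_zero_right h

theorem map_koszulDiff (L : N →ₗ[R] P) (x : ι → R) (c : Finset ι → N) (T : Finset ι) :
    L (koszulDiff x c T) = koszulDiff x (fun T ↦ L (c T)) T := by
  simp only [koszulDiff_apply, map_sum, map_zsmul, map_smul]

theorem koszulDiff_pi_apply {α : Type*} (x : ι → R) (c : Finset ι → α → N) (T : Finset ι) (i : α) :
    koszulDiff x c T i = koszulDiff x (fun T ↦ c T i) T :=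
  map_koszulDiff (LinearMap.proj i) x c T

theorem koszulDiff_mem {x : ι → R} {c : Finset ι → N} {T : Finset ι} {Q : Submodule R N}
    (h : ∀ v ∈ T, x v • c (T.erase v) ∈ Q) : koszulDiff x c T ∈ Q :=
  sum_mem fun v hv ↦ zsmul_mem (h v hv) _

end KoszulDifferential

section KoszulExactness

variable {σ R : Type*} [CommRing R]

/-- Division by the variable `X v`, discarding the terms that `X v` does not divide. -/
def divX (v : σ) : MvPolynomial σ R →+ MvPolynomial σ R where
  toFun p := p.divMonomial (Finsupp.single v 1)
  map_zero' := zero_divMonomial _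
  map_add' p q := add_divMonomial p q _

theorem coeff_divX (v : σ) (p : MvPolynomial σ R) (m : σ →₀ ℕ) :
    coeff m (divX v p) = coeff (Finsupp.single v 1 + m) p :=
  coeff_divMonomial _ _ _

theorem divX_X_mul_self (v : σ) (p : MvPolynomial σ R) : divX v (X v * p) = p :=
  X_mul_divMonomial v p

theorem divX_X_mul_of_ne {v w : σ} (h : w ≠ v) (p : MvPolynomial σ R) :
    divX v (X w * p) = X w * divX v p := by
  classical
  ext m
  have hw : w ∈ (Finsupp.single v 1 + m).support ↔ w ∈ m.support := by
    simp [Finsupp.single_eq_of_ne h]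
  simp only [coeff_divX, coeff_X_mul', hw]
  refine if_ctx_congr Iff.rfl (fun hm ↦ ?_) fun _ ↦ rfl
  rw [add_tsub_assoc_of_le (Finsupp.single_le_iff.2 (Nat.one_le_iff_ne_zero.2
    (Finsupp.mem_support_iff.1 hm)))]

theorem coeff_sub_X_mul_divX (v : σ) (p : MvPolynomial σ R) (m : σ →₀ ℕ) :
    coeff m (p - X v * divX v p) = if m v = 0 then coeff m p else 0 := by
  classical
  rw [coeff_sub, coeff_X_mul', coeff_divX]
  by_cases hm : m v = 0
  · simp [hm]
  · rw [if_pos (Finsupp.mem_support_iff.2 hm), if_neg hm, add_tsub_cancel_of_le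
      (Finsupp.single_le_iff.2 (Nat.one_le_iff_ne_zero.2 hm)), sub_self]

variable [LinearOrder σ]

/-- Contraction of a Koszul cochain with `∂/∂e_v` composed with division by `X v`: a contracting
homotopy for the factor of the Koszul complex belonging to the variable `X v`. -/
def koszulContract (v : σ) (c : Finset σ → MvPolynomial σ R) (T : Finset σ) : MvPolynomial σ R :=
  if v ∈ T then 0 else koszulSign v T • divX v (c (insert v T))

theorem koszulDiff_koszulContract_of_mem {v : σ} {T : Finset σ} (hv : v ∈ T)
    (c : Finset σ → MvPolynomial σ R) :
    koszulDiff (X : σ → MvPolynomial σ R) (koszulContract v c) T = X v * divX v (c T) := by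
  rw [koszulDiff_apply, Finset.sum_eq_single_of_mem v hv]
  · rw [koszulContract, if_neg (Finset.notMem_erase v T), Finset.insert_erase hv,
      koszulSign_erase_of_le T le_rfl, smul_comm (X v : MvPolynomial σ R), smul_smul,
      koszulSign_mul_self, one_smul, smul_eq_mul]
  · intro w _ hw
    rw [koszulContract, if_pos (Finset.mem_erase.2 ⟨hw.symm, hv⟩), smul_zero, smul_zero]

theorem koszulDiff_koszulContract_of_notMem {v : σ} {T : Finset σ} (hv : v ∉ T)
    {c : Finset σ → MvPolynomial σ R} (hc : koszulDiff (X : σ → MvPolynomial σ R) c = 0) :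
    koszulDiff (X : σ → MvPolynomial σ R) (koszulContract v c) T = c T := by
  set U := insert v T with hU
  have hvU : v ∈ U := Finset.mem_insert_self v T
  have hUT : U.erase v = T := Finset.erase_insert hv
  have hdiv : koszulSign v U • c T =
      -∑ w ∈ T, koszulSign w U • (X w * divX v (c (U.erase w))) := by
    have h := congrArg (divX v) (congrFun hc U)
    rw [koszulDiff_apply, ← Finset.add_sum_erase U _ hvU, hUT] at h
    simp only [map_add, map_sum, map_zsmul, smul_eq_mul, divX_X_mul_self, Pi.zero_apply,
      map_zero] at h
    rw [eq_neg_of_add_eq_zero_left h]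
    exact congrArg _ (Finset.sum_congr rfl fun w hw ↦ by
      rw [divX_X_mul_of_ne (ne_of_mem_of_not_mem hw hv)])
  have hterm : ∀ w ∈ T, koszulSign w T • (X w : MvPolynomial σ R) • koszulContract v c (T.erase w) =
      -(koszulSign v U • koszulSign w U • (X w * divX v (c (U.erase w)))) := by
    intro w hw
    have hwv : w ≠ v := ne_of_mem_of_not_mem hw hv
    have hsign : koszulSign w T * koszulSign v (T.erase w) =
        -(koszulSign v U * koszulSign w U) := by
      have h := koszulSign_mul_koszulSign_erase hvU (Finset.mem_insert_of_mem hw) hwv.symm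
      rw [hUT] at h
      rw [← hUT, Finset.erase_right_comm, koszulSign_erase_of_le _ le_rfl, hUT]
      linear_combination (koszulSign v U * koszulSign v (U.erase w)) * h
        - koszulSign w T * koszulSign v (U.erase w) * koszulSign_mul_self v U
        - koszulSign v U * koszulSign w U * koszulSign_mul_self v (U.erase w)
    rw [koszulContract, if_neg fun h ↦ hv (Finset.mem_of_mem_erase h),
      ← Finset.erase_insert_of_ne hwv.symm, ← hU, smul_comm (X w : MvPolynomial σ R), smul_smul,
      hsign, neg_smul, mul_smul, smul_eq_mul]
  rw [koszulDiff_apply, Finset.sum_congr rfl hterm, Finset.sum_neg_distrib, ← Finset.smul_sum,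
    ← smul_neg, ← hdiv, smul_smul, koszulSign_mul_self, one_smul]

theorem exists_coeff_sub_koszulDiff {c : Finset σ → MvPolynomial σ R}
    (hc : koszulDiff (X : σ → MvPolynomial σ R) c = 0) (A : Finset σ) :
    ∃ y : Finset σ → MvPolynomial σ R, ∀ T m,
      coeff m ((c - koszulDiff (X : σ → MvPolynomial σ R) y) T) =
        if A ⊆ T ∧ ∀ v ∈ A, m v = 0 then coeff m (c T) else 0 := by
  induction A using Finset.induction_on with
  | empty => exact ⟨0, by simp⟩
  | insert v A _ ih =>
    obtain ⟨y, hy⟩ := ih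
    set c' := c - koszulDiff (X : σ → MvPolynomial σ R) y with hc'
    have hdc' : koszulDiff (X : σ → MvPolynomial σ R) c' = 0 := by
      rw [hc', map_sub, hc, koszulDiff_koszulDiff, sub_zero]
    refine ⟨y + koszulContract v c', fun T m ↦ ?_⟩
    rw [map_add, ← sub_sub, ← hc', Pi.sub_apply]
    by_cases hv : v ∈ T
    · rw [koszulDiff_koszulContract_of_mem hv, coeff_sub_X_mul_divX, hy, ← ite_and]
      simp [Finset.insert_subset_iff, hv, and_left_comm]
    · rw [koszulDiff_koszulContract_of_notMem hv hdc']
      simp [Finset.insert_subset_iff, hv]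

theorem exists_koszulDiff_eq [Fintype σ] {c : Finset σ → MvPolynomial σ R}
    (hc : koszulDiff (X : σ → MvPolynomial σ R) c = 0) (h0 : coeff 0 (c Finset.univ) = 0) :
    ∃ y, koszulDiff (X : σ → MvPolynomial σ R) y = c := by
  obtain ⟨y, hy⟩ := exists_coeff_sub_koszulDiff hc Finset.univ
  refine ⟨y, (sub_eq_zero.1 ?_).symm⟩
  ext T m
  rw [hy]
  split_ifs with h
  · obtain rfl : T = Finset.univ := Finset.univ_subset_iff.1 h.1
    obtain rfl : m = 0 := Finsupp.ext fun v ↦ h.2 v (Finset.mem_univ v)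
    exact h0
  · rfl

theorem exists_koszulDiff_eq_pi [Fintype σ] {α : Type*} {c : Finset σ → α → MvPolynomial σ R}
    (hc : koszulDiff (X : σ → MvPolynomial σ R) c = 0) (h0 : ∀ i, coeff 0 (c Finset.univ i) = 0) :
    ∃ y, koszulDiff (X : σ → MvPolynomial σ R) y = c := by
  have hci (i : α) : koszulDiff (X : σ → MvPolynomial σ R) (fun T ↦ c T i) = 0 :=
    _root_.funext fun T ↦ by rw [← koszulDiff_pi_apply, hc]; rfl
  choose y hy using fun i ↦ exists_koszulDiff_eq (hci i) (h0 i)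
  exact ⟨fun T i ↦ y i T, by ext1 T; ext1 i; rw [koszulDiff_pi_apply, hy]⟩

end KoszulExactness

section LinearResolution

variable {σ R : Type*} [CommRing R]

theorem homogeneousComponent_add_mul {e : ℕ} {p : MvPolynomial σ R} (hp : p.IsHomogeneous e)
    (d : ℕ) (q : MvPolynomial σ R) :
    homogeneousComponent (e + d) (p * q) = p * homogeneousComponent d q := by
  let := MvPolynomial.gradedAlgebra (σ := σ) (R := R)
  rw [← decomposition.decompose'_apply, ← decomposition.decompose'_apply]
  exact DirectSum.coe_decompose_mul_add_of_left_mem (homogeneousSubmodule σ R) hp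

variable {α β : Type*} [Fintype β]

theorem exists_isHomogeneous_mulVec_eq {e d : ℕ} {L : Matrix α β (MvPolynomial σ R)}
    (hL : ∀ i j, (L i j).IsHomogeneous e) {q : α → MvPolynomial σ R}
    (hq : ∀ i, (q i).IsHomogeneous (e + d)) (hqL : q ∈ LinearMap.range L.mulVecLin) :
    ∃ w : β → MvPolynomial σ R, (∀ j, (w j).IsHomogeneous d) ∧ L.mulVec w = q := by
  obtain ⟨w, rfl⟩ := hqL
  refine ⟨fun j ↦ homogeneousComponent d (w j),
    fun j ↦ homogeneousComponent_isHomogeneous d (w j), ?_⟩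
  ext1 i
  rw [← homogeneousComponent_eq_self (hq i)]
  simp only [Matrix.mulVecLin_apply, Matrix.mulVec, dotProduct, map_sum,
    homogeneousComponent_add_mul (hL i _)]

theorem coeff_zero_mulVec {e : ℕ} {L : Matrix α β (MvPolynomial σ R)}
    (hL : ∀ i j, (L i j).IsHomogeneous (e + 1)) (w : β → MvPolynomial σ R) (i : α) :
    coeff 0 (L.mulVec w i) = 0 := by
  have h (j : β) : constantCoeff (L i j) = 0 := (hL i j).coeff_eq_zero (by simp)
  simp only [← constantCoeff_eq, Matrix.mulVec, dotProduct, map_sum, map_mul, h, zero_mul,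
    Finset.sum_const_zero]

variable [LinearOrder σ]

theorem isHomogeneous_koszulDiff {d : ℕ} {x : σ → MvPolynomial σ R}
    (hx : ∀ v, (x v).IsHomogeneous 1) {c : Finset σ → MvPolynomial σ R}
    (hc : ∀ T, (c T).IsHomogeneous d) (T : Finset σ) : (koszulDiff x c T).IsHomogeneous (1 + d) :=
  IsHomogeneous.sum _ _ _ fun v _ ↦
    zsmul_mem (K := homogeneousSubmodule σ R (1 + d)) ((hx v).mul (hc _)) _

variable [Fintype σ]

/-- Every Koszul cochain whose coefficients are forms of degree `e`, which vanishes in cochain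
degrees at most `n - k` (where `n` is the number of variables), and which is a cocycle modulo `P`,
is a coboundary modulo `P`. -/
def KoszulLifts (P : Submodule (MvPolynomial σ R) (α → MvPolynomial σ R)) (e k : ℕ) : Prop :=
  ∀ z : Finset σ → α → MvPolynomial σ R, (∀ T i, (z T i).IsHomogeneous e) →
    (∀ T, T.card + k ≤ Fintype.card σ → z T = 0) →
    (∀ T, koszulDiff (X : σ → MvPolynomial σ R) z T ∈ P) →
    ∃ y, ∀ T, z T - koszulDiff (X : σ → MvPolynomial σ R) y T ∈ P

theorem KoszulLifts.zero (P : Submodule (MvPolynomial σ R) (α → MvPolynomial σ R)) (e : ℕ) :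
    KoszulLifts P e 0 := by
  intro z _ hz _
  exact ⟨0, fun T ↦ by simp [hz T (Finset.card_le_univ T)]⟩

theorem KoszulLifts.range {e k : ℕ} {L : Matrix α β (MvPolynomial σ R)}
    (hL : ∀ i j, (L i j).IsHomogeneous (e + 1))
    (hker : KoszulLifts (LinearMap.ker L.mulVecLin) 1 k) :
    KoszulLifts (LinearMap.range L.mulVecLin) (e + 1) (k + 1) := by
  intro z hzhom hz hzL
  have hlift (T : Finset σ) : ∃ w : β → MvPolynomial σ R, (∀ j, (w j).IsHomogeneous 1) ∧
      (T.card + k ≤ Fintype.card σ → w = 0) ∧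
      L.mulVec w = koszulDiff (X : σ → MvPolynomial σ R) z T := by
    by_cases hT : T.card + k ≤ Fintype.card σ
    · refine ⟨0, fun _ ↦ isHomogeneous_zero _ _ _, fun _ ↦ rfl, ?_⟩
      rw [Matrix.mulVec_zero, koszulDiff_apply, Finset.sum_eq_zero]
      intro v hv
      rw [hz (T.erase v) (by grind), smul_zero, smul_zero]
    · obtain ⟨w, hw, hLw⟩ := exists_isHomogeneous_mulVec_eq hL (d := 1) (fun i ↦ by
        rw [koszulDiff_pi_apply, add_comm]
        exact isHomogeneous_koszulDiff (isHomogeneous_X R) (fun T ↦ hzhom T i) T) (hzL T)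
      exact ⟨w, hw, fun h ↦ absurd h hT, hLw⟩
  choose z' hz'hom hz' hLz' using hlift
  obtain ⟨y', hy'⟩ := hker z' hz'hom hz' fun T ↦ by
    rw [LinearMap.mem_ker, map_koszulDiff]
    simp only [Matrix.mulVecLin_apply, hLz']
    exact congrFun (koszulDiff_koszulDiff _ z) T
  have hLy' : koszulDiff (X : σ → MvPolynomial σ R) (fun T ↦ L.mulVec (y' T)) =
      koszulDiff (X : σ → MvPolynomial σ R) z := by
    ext1 T
    have h := hy' T
    rw [LinearMap.mem_ker, map_sub, sub_eq_zero, map_koszulDiff, Matrix.mulVecLin_apply, hLz'] at h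
    exact h.symm
  obtain ⟨y, hy⟩ := exists_koszulDiff_eq_pi (c := z - fun T ↦ L.mulVec (y' T))
    (by rw [map_sub, hLy', sub_self]) fun i ↦ by
      rw [Pi.sub_apply, Pi.sub_apply, coeff_sub, coeff_zero_mulVec hL, sub_zero]
      exact (hzhom _ i).coeff_eq_zero (by simp)
  exact ⟨y, fun T ↦ ⟨y' T, by rw [hy]; simp⟩⟩

end LinearResolution

theorem HasLinearResolution.exists_sub_koszulDiff_mem {σ K : Type*} [Field K] [LinearOrder σ]
    [Finite σ] {I : Ideal (MvPolynomial σ K)} {d : ℕ} (h : HasLinearResolution K I (d + 1))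
    {z : Finset σ → MvPolynomial σ K} (hz : ∀ T, (z T).IsHomogeneous (d + 1))
    (hzI : ∀ T, koszulDiff (X : σ → MvPolynomial σ K) z T ∈ I) :
    ∃ y, ∀ T, z T - koszulDiff (X : σ → MvPolynomial σ K) y T ∈ I := by
  cases nonempty_fintype σ
  obtain ⟨b, g, M, hg, rfl, hM, hex₀, hex⟩ := h
  have hkerM (i : ℕ) : LinearMap.ker (M i).mulVecLin = LinearMap.range (M (i + 1)).mulVecLin :=
    Submodule.ext fun v ↦ hex i v
  have hrangeM (k i : ℕ) : KoszulLifts (LinearMap.range (M i).mulVecLin) 1 k := by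
    induction k generalizing i with
    | zero => exact .zero _ _
    | succ k ih => exact .range (hM i) (hkerM i ▸ ih (i + 1))
  let L : Matrix Unit (Fin (b 0)) (MvPolynomial σ K) := .of fun _ ↦ g
  have hLg (w : Fin (b 0) → MvPolynomial σ K) : L.mulVec w = fun _ ↦ ∑ j, w j * g j := by
    ext1
    simp only [L, Matrix.mulVec, dotProduct, Matrix.of_apply, mul_comm]
  have hkerL : LinearMap.ker L.mulVecLin = LinearMap.range (M 0).mulVecLin := by
    ext w
    rw [LinearMap.mem_ker, Matrix.mulVecLin_apply, hLg]
    exact (_root_.funext_iff.trans Unique.forall_iff).trans (hex₀ w)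
  have hrangeL (q : Unit → MvPolynomial σ K) :
      q ∈ LinearMap.range L.mulVecLin ↔ q () ∈ Ideal.span (Set.range g) := by
    simp only [LinearMap.mem_range, Matrix.mulVecLin_apply, hLg,
      Ideal.mem_span_range_iff_exists_fun]
    exact exists_congr fun w ↦ _root_.funext_iff.trans Unique.forall_iff
  have hL : KoszulLifts (LinearMap.range L.mulVecLin) (d + 1) (Fintype.card σ + 2) :=
    .range (fun _ ↦ hg) (hkerL ▸ hrangeM _ 0)
  obtain ⟨y, hy⟩ := hL (fun T _ ↦ z T) (fun T _ ↦ hz T) (fun T hT ↦ by grind) fun T ↦ by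
    rw [hrangeL, koszulDiff_pi_apply]
    exact hzI T
  refine ⟨fun T ↦ y T (), fun T ↦ ?_⟩
  rw [← koszulDiff_pi_apply]
  exact (hrangeL _).1 (hy T)

section CutCochain

variable {σ R : Type*} [CommRing R]

theorem isHomogeneous_indicator_X (A : Set σ) (v : σ) :
    (A.indicator (X : σ → MvPolynomial σ R) v).IsHomogeneous 1 := by
  by_cases hv : v ∈ A
  · rw [Set.indicator_of_mem hv]
    exact isHomogeneous_X R v
  · rw [Set.indicator_of_notMem hv]
    exact isHomogeneous_zero σ R 1

theorem indicator_X_mem {I : Ideal (MvPolynomial σ R)} {A : Set σ} (h : ∀ a ∈ A, X a ∈ I) (v : σ) :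
    A.indicator (X : σ → MvPolynomial σ R) v ∈ I := by
  by_cases hv : v ∈ A
  · rw [Set.indicator_of_mem hv]
    exact h v hv
  · rw [Set.indicator_of_notMem hv]
    exact I.zero_mem

theorem coeff_single_add_indicator_X_mul (A : Set σ) (v : σ) (m : σ →₀ ℕ) (p : MvPolynomial σ R) :
    coeff (Finsupp.single v 1 + m) (A.indicator (X : σ → MvPolynomial σ R) v * p) =
      A.indicator 1 v * coeff m p := by
  by_cases hv : v ∈ A
  · rw [Set.indicator_of_mem hv, Set.indicator_of_mem hv, coeff_X_mul, Pi.one_apply, one_mul]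
  · simp only [Set.indicator_of_notMem hv, zero_mul, coeff_zero]

theorem coeff_indicator_X_mul_of_eq_zero {A : Set σ} {v : σ} {m : σ →₀ ℕ} (hv : m v = 0)
    (p : MvPolynomial σ R) : coeff m (A.indicator (X : σ → MvPolynomial σ R) v * p) = 0 := by
  classical
  by_cases hvA : v ∈ A
  · rw [Set.indicator_of_mem hvA, coeff_X_mul', if_neg (by simpa using hv)]
  · rw [Set.indicator_of_notMem hvA, zero_mul, coeff_zero]

theorem coeff_zsmul (m : σ →₀ ℕ) (k : ℤ) (p : MvPolynomial σ R) :
    coeff m (k • p) = k • coeff m p :=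
  map_zsmul (coeffAddMonoidHom m) k p

variable [LinearOrder σ]

/-- The part of the Koszul differential belonging to the variables in `A`, that is, the wedge
product with `∑ a ∈ A, X a • e_a`. -/
abbrev koszulDiffOn (A : Set σ) :
    (Finset σ → MvPolynomial σ R) →ₗ[MvPolynomial σ R] (Finset σ → MvPolynomial σ R) :=
  koszulDiff (A.indicator X)

/-- The linear coefficients of the cochain `y` along the `e_v ∧ e_Q`, as a function of `v`. -/
def koszulPotential (y : Finset σ → MvPolynomial σ R) (Q : Finset σ) (v : σ) : R :=
  koszulSign v Q • coeff (Finsupp.single v 1) (y (insert v Q))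

theorem coeff_koszulDiffOn (B : Set σ) (y : Finset σ → MvPolynomial σ R) {Q : Finset σ}
    {u v : σ} (huv : u ≠ v) (hu : u ∉ Q) (hv : v ∉ Q) :
    coeff (Finsupp.single u 1 + Finsupp.single v 1)
        (koszulDiffOn B y (insert u (insert v Q))) =
      (koszulSign u (insert u (insert v Q)) * koszulSign v Q) •
        (B.indicator 1 u * koszulPotential y Q v - B.indicator 1 v * koszulPotential y Q u) := by
  set T := insert u (insert v Q) with hT
  have hTu : T.erase u = insert v Q := Finset.erase_insert (by simp [huv, hu])
  have hTv : T.erase v = insert u Q := by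
    rw [hT, Finset.insert_comm]
    exact Finset.erase_insert (by simp [huv.symm, hv])
  have hpot (w : σ) : coeff (Finsupp.single w 1) (y (insert w Q)) =
      koszulSign w Q • koszulPotential y Q w := by
    rw [koszulPotential, smul_smul, koszulSign_mul_self, one_smul]
  rw [koszulDiff_apply, coeff_sum, Finset.sum_eq_add_of_mem u v (by simp [hT]) (by simp [hT]) huv]
  · simp only [coeff_zsmul, smul_eq_mul, hTu, hTv]
    rw [coeff_single_add_indicator_X_mul, add_comm (Finsupp.single u 1),
      coeff_single_add_indicator_X_mul, hpot, hpot, smul_sub]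
    nth_rw 2 [koszulSign_insert_mul_koszulSign huv hu hv]
    simp only [mul_smul_comm, mul_smul, neg_smul, sub_neg_eq_add, hT]
  · rintro w - ⟨hwu, hwv⟩
    rw [coeff_zsmul, smul_eq_mul, coeff_indicator_X_mul_of_eq_zero, smul_zero]
    simp [hwu.symm, hwv.symm]

theorem koszulPotential_koszulDiffOn_single (A : Set σ) {Q : Finset σ} {v : σ} (hv : v ∉ Q) :
    koszulPotential (koszulDiffOn A (Pi.single Q (1 : MvPolynomial σ R))) Q v =
      A.indicator 1 v := by
  rw [koszulPotential, koszulDiff_apply, Finset.sum_eq_single_of_mem v (Q.mem_insert_self v)]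
  · rw [Finset.erase_insert hv, Pi.single_eq_same, smul_eq_mul, coeff_zsmul, smul_smul,
      ← koszulSign_erase_of_le (insert v Q) le_rfl, Finset.erase_insert hv, koszulSign_mul_self,
      one_smul]
    simpa using coeff_single_add_indicator_X_mul A v 0 (1 : MvPolynomial σ R)
  · intro w _ hwv
    rw [Pi.single_eq_of_ne, smul_zero, smul_zero]
    exact fun h ↦ hv (h ▸ by simp [hwv.symm])

/-- The Koszul cochain `X_s e_s ∧ (∑ a ∈ A, X_a e_a) ∧ e_Q`. -/
def cutCochain (R : Type*) [CommRing R] (s : σ) (A : Set σ) (Q : Finset σ) :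
    Finset σ → MvPolynomial σ R :=
  koszulDiffOn {s} (koszulDiffOn A (Pi.single Q 1))

theorem isHomogeneous_cutCochain (s : σ) (A : Set σ) (Q T : Finset σ) :
    (cutCochain R s A Q T).IsHomogeneous 2 := by
  have h (U : Finset σ) :
      ((Pi.single Q 1 : Finset σ → MvPolynomial σ R) U).IsHomogeneous 0 := by
    rw [Pi.single_apply]
    split_ifs
    · exact isHomogeneous_one σ R
    · exact isHomogeneous_zero σ R 0
  exact isHomogeneous_koszulDiff (isHomogeneous_indicator_X _)
    (isHomogeneous_koszulDiff (isHomogeneous_indicator_X A) h) T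

theorem koszulDiff_eq_zero_of_not_subset {x : σ → MvPolynomial σ R}
    {c : Finset σ → MvPolynomial σ R} {Q T : Finset σ} (hc : ∀ U, ¬Q ⊆ U → c U = 0)
    (hT : ¬Q ⊆ T) : koszulDiff x c T = 0 :=
  Finset.sum_eq_zero fun v _ ↦ by
    rw [hc _ fun h ↦ hT (h.trans (T.erase_subset v)), smul_zero, smul_zero]

theorem cutCochain_eq_zero_of_not_subset {s : σ} {A : Set σ} {Q T : Finset σ} (hT : ¬Q ⊆ T) :
    cutCochain R s A Q T = 0 :=
  koszulDiff_eq_zero_of_not_subset (fun _ ↦ koszulDiff_eq_zero_of_not_subset fun _ h ↦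
    Pi.single_eq_of_ne (fun hQ ↦ h hQ.ge) 1) hT

theorem cutCochain_mem {I : Ideal (MvPolynomial σ R)} {s : σ} {A : Set σ}
    (h : X s ∈ I ∨ ∀ a ∈ A, X a ∈ I) (Q T : Finset σ) : cutCochain R s A Q T ∈ I := by
  refine koszulDiff_mem fun v _ ↦ ?_
  rcases h with hs | hA
  · exact I.mul_mem_right _ (indicator_X_mem (by simpa using hs) v)
  · exact I.mul_mem_left _ (koszulDiff_mem fun a _ ↦ I.mul_mem_right _ (indicator_X_mem hA a))

theorem koszulDiff_cutCochain {s : σ} {A : Set σ} (hs : s ∉ A) (Q : Finset σ) :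
    koszulDiff (X : σ → MvPolynomial σ R) (cutCochain R s A Q) =
      koszulDiffOn (insert s A)ᶜ (cutCochain R s A Q) := by
  have hX : (X : σ → MvPolynomial σ R) =
      ({s} : Set σ).indicator X + A.indicator X + (insert s A)ᶜ.indicator X := by
    have hsA := Set.indicator_union_of_disjoint (Set.disjoint_singleton_left.2 hs)
      (X : σ → MvPolynomial σ R)
    exact (Set.indicator_self_add_compl (insert s A) X).symm.trans (congrArg (· + _) hsA)
  conv_lhs => rw [hX]
  rw [koszulDiff_add, koszulDiff_add, cutCochain, koszulDiff_koszulDiff, koszulDiff_comm,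
    koszulDiff_koszulDiff, map_zero, neg_zero, zero_add, zero_add]

theorem koszulDiff_cutCochain_mem {I : Ideal (MvPolynomial σ R)} {s : σ} {A : Set σ} (hs : s ∉ A)
    {Q : Finset σ} (h : ∀ w ∉ Q, w ≠ s → w ∉ A → X w * X s ∈ I ∨ ∀ a ∈ A, X w * X a ∈ I)
    (T : Finset σ) : koszulDiff (X : σ → MvPolynomial σ R) (cutCochain R s A Q) T ∈ I := by
  rw [koszulDiff_cutCochain hs]
  refine koszulDiff_mem fun w _ ↦ ?_
  by_cases hwA : w ∈ (insert s A)ᶜ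
  swap
  · rw [Set.indicator_of_notMem hwA, zero_smul]
    exact I.zero_mem
  by_cases hwQ : w ∈ Q
  · rw [cutCochain_eq_zero_of_not_subset fun hQ ↦ Finset.notMem_erase w T (hQ hwQ), smul_zero]
    exact I.zero_mem
  rw [Set.indicator_of_mem hwA, smul_eq_mul, mul_comm, ← Ideal.mem_colon_span_singleton]
  refine cutCochain_mem ?_ Q _
  simp only [Set.mem_compl_iff, Set.mem_insert_iff, not_or] at hwA
  simpa only [Ideal.mem_colon_span_singleton, mul_comm (X w)] using h w hwQ hwA.1 hwA.2

end CutCochain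

section CliqueSeparators

variable {V : Type*}

/-- Every minimal vertex separator of `H` is a clique: if `A` is connected and `b` lies outside the
closed neighbourhood of `A`, then the common neighbours of `b` and `A` are pairwise adjacent. By a
theorem of Dirac, this property characterises chordal graphs. -/
def HasCliqueSeparators (H : SimpleGraph V) : Prop :=
  ∀ (A : Set V) (b : V), (H.induce A).Connected → b ∉ A → (∀ a ∈ A, ¬H.Adj b a) →
    H.IsClique {s | H.Adj s b ∧ ∃ a ∈ A, H.Adj s a}

theorem eq_of_preconnected {H : SimpleGraph V} (hH : H.Preconnected) {α : Type*} {f : V → α}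
    (hf : ∀ u v, H.Adj u v → f u = f v) (u v : V) : f u = f v := by
  obtain ⟨p⟩ := hH u v
  induction p with
  | nil => rfl
  | cons h _ ih => exact (hf _ _ h).trans ih

variable {K : Type*} [Field K] {n : ℕ} {G : SimpleGraph (Fin n)}

theorem X_mul_X_mem_edgeIdeal {i j : Fin n} (h : G.Adj i j) : X i * X j ∈ edgeIdeal K G :=
  Ideal.subset_span ⟨i, j, h, rfl⟩

theorem edgeIdeal_eq_span_monomial (G : SimpleGraph (Fin n)) :
    edgeIdeal K G = Ideal.span ((fun m ↦ monomial m (1 : K)) ''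
      {m | ∃ i j, G.Adj i j ∧ m = Finsupp.single i 1 + Finsupp.single j 1}) := by
  have hX (i j : Fin n) : X i * X j =
      monomial (Finsupp.single i 1 + Finsupp.single j 1) (1 : K) := by
    rw [X, X, monomial_mul, one_mul]
  unfold edgeIdeal
  congr 1
  ext f
  constructor
  · rintro ⟨i, j, h, rfl⟩
    exact ⟨_, ⟨i, j, h, rfl⟩, (hX i j).symm⟩
  · rintro ⟨_, ⟨i, j, h, rfl⟩, rfl⟩
    exact ⟨i, j, h, (hX i j).symm⟩

theorem coeff_eq_zero_of_mem_edgeIdeal {p : MvPolynomial (Fin n) K} (hp : p ∈ edgeIdeal K G)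
    {u v : Fin n} (huv : ¬G.Adj u v) : coeff (Finsupp.single u 1 + Finsupp.single v 1) p = 0 := by
  rw [edgeIdeal_eq_span_monomial, mem_ideal_span_monomial_image] at hp
  by_contra hc
  obtain ⟨_, ⟨i, j, hij, rfl⟩, hle⟩ := hp _ (mem_support_iff.2 hc)
  have hi : u = i ∨ v = i := by
    by_contra! h
    simpa [Finsupp.single_apply, h.1, h.2] using hle i
  have hj : u = j ∨ v = j := by
    by_contra! h
    simpa [Finsupp.single_apply, h.1, h.2] using hle j
  grind [hij.ne, hij.symm]

theorem HasLinearResolution.exists_potential (h : HasLinearResolution K (edgeIdeal K G) 2)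
    {s : Fin n} {A W : Set (Fin n)} (hsA : s ∉ A) (hsW : s ∈ W)
    (hW : ∀ w ∈ W, w ≠ s → w ∉ A → G.Adj w s ∨ ∀ a ∈ A, G.Adj w a) :
    ∃ f : Fin n → K, (∀ u ∈ W \ {s}, ∀ v ∈ W \ {s}, Gᶜ.Adj u v → f u = f v) ∧
      ∀ v ∈ W, Gᶜ.Adj s v → f v = f s + A.indicator 1 v := by
  classical
  have hQ {w : Fin n} : w ∈ W ↔ w ∉ Wᶜ.toFinset := by simp
  set Q := Wᶜ.toFinset
  obtain ⟨y, hy⟩ := h.exists_sub_koszulDiff_mem (isHomogeneous_cutCochain s A Q)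
    (koszulDiff_cutCochain_mem hsA fun w hwQ hws hwA ↦ (hW w (hQ.2 hwQ) hws hwA).imp
      X_mul_X_mem_edgeIdeal fun h a ha ↦ X_mul_X_mem_edgeIdeal (h a ha))
  let f : Fin n → K := koszulPotential y Q
  suffices hf : ∀ u ∈ W, ∀ v ∈ W, Gᶜ.Adj u v →
      f v - f u = ({s} : Set (Fin n)).indicator 1 u * A.indicator 1 v -
        ({s} : Set (Fin n)).indicator 1 v * A.indicator 1 u by
    refine ⟨f, fun u ⟨hu, hus⟩ v ⟨hv, hvs⟩ huv ↦ ?_, fun v hv hsv ↦ ?_⟩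
    · simpa [hus, hvs, sub_eq_zero] using hf v hv u hu huv.symm
    · simpa [hsv.ne', sub_eq_iff_eq_add'] using hf s hsW v hv hsv
  intro u hu v hv huv
  rw [hQ] at hu hv
  have hcoeff := coeff_eq_zero_of_mem_edgeIdeal (hy (insert u (insert v Q)))
    ((SimpleGraph.compl_adj _ _ _).1 huv).2
  rw [coeff_sub, cutCochain, coeff_koszulDiffOn _ _ huv.ne hu hv, ← Set.indicator_univ X,
    coeff_koszulDiffOn _ _ huv.ne hu hv, koszulPotential_koszulDiffOn_single A hu,
    koszulPotential_koszulDiffOn_single A hv, ← smul_sub] at hcoeff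
  simp only [Set.indicator_univ, Pi.one_apply, one_mul] at hcoeff
  have hsign : IsUnit (koszulSign u (insert u (insert v Q)) * koszulSign v Q) :=
    (IsUnit.of_mul_eq_one _ (koszulSign_mul_self _ _)).mul
      (IsUnit.of_mul_eq_one _ (koszulSign_mul_self _ _))
  exact (sub_eq_zero.1 (hsign.smul_eq_zero.1 hcoeff)).symm

theorem HasLinearResolution.hasCliqueSeparators_compl
    (h : HasLinearResolution K (edgeIdeal K G) 2) : HasCliqueSeparators Gᶜ := by
  rintro A b hA hbA hb s ⟨hsb, x, hxA, hsx⟩ t ⟨htb, x', hx'A, htx'⟩ hst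
  by_contra hst'
  have hGst : G.Adj s t := by
    rw [SimpleGraph.compl_adj] at hst'
    tauto
  have hsA : s ∉ A := fun hs ↦ hb s hs hsb.symm
  have hbG (a : Fin n) (ha : a ∈ A) : G.Adj b a := by
    have hba := hb a ha
    rw [SimpleGraph.compl_adj] at hba
    grind
  obtain ⟨f, hf, hfs⟩ := h.exists_potential (W := insert s (insert b (insert t A))) hsA
    (by simp) <| by
      rintro w (rfl | rfl | rfl | hw) hws hwA
      exacts [absurd rfl hws, .inr hbG, .inl hGst.symm, absurd hw hwA]
  have hAs {a : Fin n} (ha : a ∈ A) : a ≠ s := ne_of_mem_of_not_mem ha hsA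
  have hfA : f x = f x' := eq_of_preconnected hA.preconnected (f := fun a : A ↦ f a)
    (fun u v huv ↦ hf u (by simp [hAs u.2]) v (by simp [hAs v.2]) huv) ⟨x, hxA⟩ ⟨x', hx'A⟩
  have hfb : f b = f s := by
    simpa [hbA] using hfs b (by simp) hsb
  have hfx : f x = f s + 1 := by
    simpa [hxA] using hfs x (by simp [hxA]) hsx
  have hftb : f t = f b := hf t (by simp [hst.symm]) b (by simp [hsb.ne']) htb
  have hftx' : f t = f x' := hf t (by simp [hst.symm]) x' (by simp [hx'A, hAs hx'A]) htx'
  exact one_ne_zero (α := K) (by linear_combination hfA - hfx + hfb + hftb - hftx')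

end CliqueSeparators

section SimplicialVertices

variable {V : Type*} {H : SimpleGraph V}

theorem exists_connected_induce_of_mem {Z : Set V} {z : V} (hz : z ∈ Z) :
    ∃ A ⊆ Z, (H.induce A).Connected ∧ ∀ a ∈ A, ∀ v ∈ Z, H.Adj v a → v ∈ A := by
  let C := (H.induce Z).connectedComponentMk ⟨z, hz⟩
  refine ⟨(↑) '' C.supp, Subtype.coe_image_subset Z C.supp, ?_, ?_⟩
  · let φ : C.toSimpleGraph →g H.induce ((↑) '' C.supp) :=
      ⟨fun c ↦ ⟨c, c, c.2, rfl⟩, fun h ↦ h⟩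
    refine C.connected_toSimpleGraph.map φ ?_
    rintro ⟨_, c, hc, rfl⟩
    exact ⟨⟨c, hc⟩, rfl⟩
  · rintro _ ⟨a, ha, rfl⟩ v hv hva
    exact ⟨⟨v, hv⟩, (C.mem_supp_congr_adj (SimpleGraph.induce_adj.2 hva)).2 ha, rfl⟩

theorem HasCliqueSeparators.exists_isClique_sdiff (hH : HasCliqueSeparators H) {U : Finset V}
    {b c : V} (hb : b ∈ U) (hc : c ∈ U) (hcb : c ≠ b) (hbc : ¬H.Adj b c) :
    ∃ W ⊂ U, ∃ A ⊆ {v | v ∈ U ∧ v ≠ b ∧ ¬H.Adj b v}, A.Nonempty ∧ H.IsClique (↑W \ A) ∧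
      ∀ a ∈ A, ↑U ∩ H.neighborSet a ⊆ W := by
  classical
  obtain ⟨A, hAZ, hA, hAclosed⟩ :=
    exists_connected_induce_of_mem (H := H) (Z := {v | v ∈ U ∧ v ≠ b ∧ ¬H.Adj b v}) ⟨hc, hcb, hbc⟩
  have hbA : b ∉ A := fun h ↦ (hAZ h).2.1 rfl
  have hb_nonadj (a : V) (ha : a ∈ A) : ¬H.Adj b a := (hAZ ha).2.2
  have hb_adj {s : V} (hsU : s ∈ U) (hsA : s ∉ A) (hs : ∃ a ∈ A, H.Adj s a) : H.Adj s b := by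
    obtain ⟨a, ha, hsa⟩ := hs
    by_contra hsb
    refine hsA (hAclosed a ha s ⟨hsU, ?_, fun h ↦ hsb h.symm⟩ hsa)
    rintro rfl
    exact hb_nonadj a ha hsa
  refine ⟨{v ∈ U | v ∈ A ∨ ∃ a ∈ A, H.Adj v a}, Finset.filter_ssubset.2 ⟨b, hb, ?_⟩, A, hAZ,
    Set.nonempty_coe_sort.1 hA.nonempty, (hH A b hA hbA hb_nonadj).subset ?_, ?_⟩
  · exact not_or.2 ⟨hbA, fun ⟨a, ha, hba⟩ ↦ hb_nonadj a ha hba⟩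
  · rintro s ⟨hsW, hsA⟩
    obtain ⟨hsU, hs⟩ := Finset.mem_filter.1 hsW
    exact ⟨hb_adj hsU hsA (hs.resolve_left hsA), hs.resolve_left hsA⟩
  · exact fun a ha v ⟨hvU, hav⟩ ↦ Finset.mem_filter.2 ⟨hvU, .inr ⟨a, ha, hav.symm⟩⟩

theorem HasCliqueSeparators.exists_isClique_inter_neighborSet (hH : HasCliqueSeparators H)
    {U : Finset V} {b c : V} (hb : b ∈ U) (hc : c ∈ U) (hcb : c ≠ b) (hbc : ¬H.Adj b c) :
    ∃ a ∈ U, a ≠ b ∧ ¬H.Adj b a ∧ H.IsClique (↑U ∩ H.neighborSet a) := by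
  induction U using Finset.strongInduction generalizing b c with
  | H U ih =>
  obtain ⟨W, hWU, A, hAU, hA, hWA, hAW⟩ := hH.exists_isClique_sdiff hb hc hcb hbc
  suffices ∃ a ∈ A, H.IsClique (↑W ∩ H.neighborSet a) by
    obtain ⟨a, ha, hclique⟩ := this
    obtain ⟨haU, hab, hba⟩ := hAU ha
    exact ⟨a, haU, hab, hba, hclique.subset (Set.subset_inter (hAW a ha) Set.inter_subset_right)⟩
  by_cases hW : H.IsClique (W : Set V)
  · obtain ⟨a, ha⟩ := hA
    exact ⟨a, ha, hW.subset Set.inter_subset_left⟩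
  obtain ⟨p, hp, q, hq, hpq, hpq'⟩ : ∃ p ∈ W, ∃ q ∈ W, p ≠ q ∧ ¬H.Adj p q := by
    simpa [SimpleGraph.isClique_iff, Set.Pairwise] using hW
  obtain ⟨a, haW, hap, hpa, ha⟩ := ih W hWU hp hq hpq.symm hpq'
  by_cases haA : a ∈ A
  · exact ⟨a, haA, ha⟩
  obtain ⟨a', ha'W, ha'a, haa', ha'⟩ := ih W hWU haW hp hap.symm fun h ↦ hpa h.symm
  exact ⟨a', by_contra fun h ↦ haa' (hWA ⟨haW, haA⟩ ⟨ha'W, h⟩ ha'a.symm), ha'⟩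

end SimplicialVertices

section VNumber

theorem isPrime_span_X_image {σ R : Type*} [CommRing R] [IsDomain R] (s : Set σ) :
    (Ideal.span ((X : σ → MvPolynomial σ R) '' s)).IsPrime := by
  suffices Ideal.span ((X : σ → MvPolynomial σ R) '' s) =
      RingHom.ker (killCompl (R := R) (f := ((↑) : (sᶜ : Set σ) → σ)) Subtype.val_injective) from
    this ▸ RingHom.ker_isPrime _
  ext p
  rw [mem_ideal_span_X_image, RingHom.mem_ker, ← support_eq_empty, support_killCompl,
    Finset.eq_empty_iff_forall_notMem]
  simp only [Finset.mem_preimage]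
  constructor
  · intro h m hm
    obtain ⟨i, his, hi⟩ := h _ hm
    exact hi (Finsupp.mapDomain_of_notMem_range _ _ (by simpa using his))
  · intro h m hm
    by_contra! hs
    refine h (m.comapDomain Subtype.val Subtype.val_injective.injOn) ?_
    rwa [Finsupp.mapDomain_comapDomain _ Subtype.val_injective]
    intro i hi
    rw [Subtype.range_coe]
    exact fun his ↦ Finsupp.mem_support_iff.1 hi (hs i his)

theorem X_mem_span_X_image_iff {σ R : Type*} [CommRing R] [Nontrivial R] {s : Set σ} {v : σ} :
    (X v : MvPolynomial σ R) ∈ Ideal.span (X '' s) ↔ v ∈ s := by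
  simp only [mem_ideal_span_X_image, support_X, Finset.mem_singleton, forall_eq,
    Finsupp.single_apply_ne_zero, ne_eq, one_ne_zero, not_false_eq_true, and_true, exists_eq_right]

variable {K σ : Type*} [Field K] {I : Ideal (MvPolynomial σ K)} {f : MvPolynomial σ K}

theorem colon_span_singleton_mem_assPrimes_iff :
    I.colon (Ideal.span {f}) ∈ assPrimes K I ↔ (I.colon (Ideal.span {f})).IsPrime := by
  refine ⟨fun h ↦ h.1, fun h ↦ ⟨h, Ideal.Quotient.mk I f, ?_⟩⟩
  have hcolon : (⊥ : Submodule (MvPolynomial σ K) (MvPolynomial σ K ⧸ I)).colon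
      {Ideal.Quotient.mk I f} = I.colon (Ideal.span {f}) := by
    ext p
    rw [Submodule.mem_colon_singleton, Submodule.mem_bot, Ideal.mem_colon_span_singleton,
      ← Ideal.Quotient.eq_zero_iff_mem]
    rfl
  rw [hcolon, h.radical]

theorem isPrime_of_isPrime_colon_of_isHomogeneous_zero (hf : f.IsHomogeneous 0)
    (h : (I.colon (Ideal.span {f})).IsPrime) : I.IsPrime := by
  have hfC : f = C (coeff 0 f) := by
    rw [← homogeneousComponent_zero, homogeneousComponent_eq_self hf]
  have hf0 : coeff 0 f ≠ 0 := by
    intro h0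
    rw [hfC, h0, C_0, Ideal.colon_span, Submodule.colon_singleton_zero] at h
    exact h.ne_top rfl
  have hunit : IsUnit f := hfC ▸ (IsUnit.mk0 _ hf0).map C
  rwa [Submodule.ext fun p ↦ Ideal.mem_colon_span_singleton.trans
    (Ideal.mul_unit_mem_iff_mem I hunit)] at h

theorem vNumber_eq_one (hI : ¬I.IsPrime) (hf : f.IsHomogeneous 1)
    (h : (I.colon (Ideal.span {f})).IsPrime) : vNumber K I = 1 := by
  have hmem : ∃ g : MvPolynomial σ K, g.IsHomogeneous 1 ∧
      I.colon (Ideal.span {g}) ∈ assPrimes K I :=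
    ⟨f, hf, colon_span_singleton_mem_assPrimes_iff.2 h⟩
  refine le_antisymm (Nat.sInf_le hmem) (Nat.one_le_iff_ne_zero.2 fun h0 ↦ hI ?_)
  obtain ⟨g, hg, hgass⟩ : vNumber K I ∈ _ := Nat.sInf_mem ⟨1, hmem⟩
  exact isPrime_of_isPrime_colon_of_isHomogeneous_zero (h0 ▸ hg)
    (colon_span_singleton_mem_assPrimes_iff.1 hgass)

variable {n : ℕ} {G : SimpleGraph (Fin n)}

theorem edgeIdeal_le_span_X_image {s : Set (Fin n)} (h : G.IsVertexCover s) :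
    edgeIdeal K G ≤ Ideal.span (X '' s) := by
  refine Ideal.span_le.2 ?_
  rintro _ ⟨i, j, hij, rfl⟩
  exact (h hij).elim (fun hi ↦ Ideal.mul_mem_right _ _ (Ideal.subset_span ⟨i, hi, rfl⟩))
    fun hj ↦ Ideal.mul_mem_left _ _ (Ideal.subset_span ⟨j, hj, rfl⟩)

theorem X_notMem_edgeIdeal (u : Fin n) : X u ∉ edgeIdeal K G := by
  have hcover : G.IsVertexCover {u}ᶜ := SimpleGraph.isVertexCover_compl.2 (by simp)
  exact fun hu ↦ X_mem_span_X_image_iff.1 (edgeIdeal_le_span_X_image hcover hu) rfl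

theorem not_isPrime_edgeIdeal {i j : Fin n} (h : G.Adj i j) : ¬(edgeIdeal K G).IsPrime := fun hI ↦
  (hI.mem_or_mem (X_mul_X_mem_edgeIdeal h)).elim (X_notMem_edgeIdeal i) (X_notMem_edgeIdeal j)

theorem edgeIdeal_colon_X {v : Fin n} (h : G.IsVertexCover (G.neighborSet v)) :
    (edgeIdeal K G).colon (Ideal.span {(X v : MvPolynomial (Fin n) K)}) =
      Ideal.span (X '' G.neighborSet v) := by
  refine le_antisymm (fun p hp ↦ ?_) (Ideal.span_le.2 ?_)
  · rw [Ideal.mem_colon_span_singleton] at hp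
    refine ((isPrime_span_X_image _).mem_or_mem (edgeIdeal_le_span_X_image h hp)).resolve_right ?_
    exact fun hv ↦ G.irrefl (X_mem_span_X_image_iff.1 hv)
  · rintro _ ⟨u, hu, rfl⟩
    exact Ideal.mem_colon_span_singleton.2 (X_mul_X_mem_edgeIdeal hu.symm)

theorem isVertexCover_neighborSet_of_isClique {V : Type*} {G : SimpleGraph V} {v : V}
    (h : Gᶜ.IsClique (Gᶜ.neighborSet v)) : G.IsVertexCover (G.neighborSet v) := by
  intro i j hij
  by_contra! hc
  simp only [SimpleGraph.mem_neighborSet] at hc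
  have hi : Gᶜ.Adj v i := (SimpleGraph.compl_adj _ _ _).2 ⟨fun h ↦ hc.2 (h ▸ hij), hc.1⟩
  have hj : Gᶜ.Adj v j := (SimpleGraph.compl_adj _ _ _).2 ⟨fun h ↦ hc.1 (h ▸ hij.symm), hc.2⟩
  exact ((SimpleGraph.compl_adj _ _ _).1 (h hi hj hij.ne)).2 hij

end VNumber

/-- If the edge ideal `I(G)` has a linear resolution, then `v(I(G)) = 1`. -/
theorem stmt13 {n : ℕ} (G : SimpleGraph (Fin n)) (he : G.edgeSet.Nonempty)
    (hlin : HasLinearResolution K (edgeIdeal K G) 2) :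
    vNumber K (edgeIdeal K G) = 1 := by
  obtain ⟨⟨i, j⟩, hij : G.Adj i j⟩ := he
  obtain ⟨v, -, -, -, hv⟩ :=
    hlin.hasCliqueSeparators_compl.exists_isClique_inter_neighborSet
      (Finset.mem_univ i) (Finset.mem_univ j) hij.ne' fun h ↦ ((G.compl_adj i j).1 h).2 hij
  have hcover : G.IsVertexCover (G.neighborSet v) :=
    isVertexCover_neighborSet_of_isClique (by simpa using hv)
  refine vNumber_eq_one (not_isPrime_edgeIdeal hij) (isHomogeneous_X K v) ?_
  rw [edgeIdeal_colon_X hcover]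
  exact isPrime_span_X_image _

end
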